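/- arXiv:1008.2170 — 2 statements merged into one kernel-verified Lean document; each statement's English description precedes it below -/
import Mathlib

section
/- For n ≥ 3, the overlap number of the path P_n on n vertices equals n. -/
/-- Two finite sets overlap: they intersect and neither contains the other. -/
def Overlaps (A B : Finset ℕ) : Prop :=
  (A ∩ B).Nonempty ∧ ¬ A ⊆ B ∧ ¬ B ⊆ A

/-- An overlap representation of a graph: nonempty sets assigned to vertices such that
two vertices are adjacent iff their sets overlap. -/
def IsOverlapRep {V : Type*} (G : SimpleGraph V) (S : V → Finset ℕ) : Prop :=
  (∀ v, (S v).Nonempty) ∧ ∀ u v, G.Adj u v ↔ Overlaps (S u) (S v)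

/-- The overlap number: the minimum number of elements used in an overlap representation. -/
noncomputable def overlapNumber {V : Type*} (G : SimpleGraph V) : ℕ :=
  sInf {n | ∃ S : V → Finset ℕ, IsOverlapRep G S ∧ (⋃ v, (S v : Set ℕ)).ncard = n}

/-! The lower bound is by induction on `n`: delete an end of the path together with one element.

If `A` contains `S j` and does not overlap `S (j + 1)`, then it contains `S (j + 1)` as well.
Hence if each end contained the set of a vertex not adjacent to it, the two ends would contain
each other, so their sets would be equal although they have different neighbours. So, up to
reversal, no nonneighbour of vertex `0` has its set inside `S 0`: each such set contains `S 0` or is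
disjoint from it. Consequently an element `x` of `S 0 ∩ S 1` and an element `y` of `S 0 \ S 1` are
separated, among `S 1, S 2, …`, by `S 1` alone. One of `x`, `y` can then be removed from all these
sets without changing which of them overlap: `y`, unless it is the only element of `S 2 \ S 1`,
in which case `S 1` contains `S 3, S 4, …`, so these miss `y`, hence also `x`, and `x` is
dispensable.
-/

section Overlaps

variable {A B C : Finset ℕ} {a x y z : ℕ}

theorem overlaps_iff_exists : Overlaps A B ↔
    (∃ a ∈ A, a ∈ B) ∧ (∃ a ∈ A, a ∉ B) ∧ ∃ a ∈ B, a ∉ A := by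
  simp only [Overlaps, Finset.Nonempty, Finset.mem_inter, Finset.not_subset]

theorem not_overlaps_self : ¬ Overlaps A A :=
  fun h => h.2.1 Finset.Subset.rfl

theorem subset_or_subset_of_not_overlaps (h : ¬ Overlaps A B) (haA : a ∈ A) (haB : a ∈ B) :
    A ⊆ B ∨ B ⊆ A := by
  by_contra! hAB
  exact h ⟨⟨a, Finset.mem_inter.2 ⟨haA, haB⟩⟩, hAB.1, hAB.2⟩

theorem mem_iff_mem_of_not_overlaps (h : ¬ Overlaps A B) (hBA : ¬ B ⊆ A) (hx : x ∈ A)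
    (hy : y ∈ A) : x ∈ B ↔ y ∈ B := by
  have subset_of_mem {a : ℕ} (haA : a ∈ A) (haB : a ∈ B) : A ⊆ B :=
    (subset_or_subset_of_not_overlaps h haA haB).resolve_right hBA
  exact ⟨fun hxB => subset_of_mem hx hxB hy, fun hyB => subset_of_mem hy hyB hx⟩

namespace Overlaps

theorem symm (h : Overlaps A B) : Overlaps B A :=
  ⟨Finset.inter_comm A B ▸ h.1, h.2.2, h.2.1⟩

theorem nonempty_left (h : Overlaps A B) : A.Nonempty :=
  h.1.mono Finset.inter_subset_left

theorem three_le_card_union (h : Overlaps A B) : 3 ≤ (A ∪ B).card := by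
  obtain ⟨⟨a, haA, haB⟩, ⟨b, hbA, hbB⟩, ⟨c, hcB, hcA⟩⟩ := overlaps_iff_exists.1 h
  refine Finset.two_lt_card.2 ⟨a, Finset.mem_union_left B haA, b, Finset.mem_union_left B hbA,
    c, Finset.mem_union_right A hcB, ?_, ?_, ?_⟩
  · exact fun hab => hbB (hab ▸ haB)
  · exact fun hac => hcA (hac ▸ haA)
  · exact fun hbc => hcA (hbc ▸ hbA)

theorem subset_of_subset (hAB : Overlaps A B) (hBC : ¬ Overlaps B C) (hAC : A ⊆ C) :
    B ⊆ C := by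
  obtain ⟨⟨a, haA, haB⟩, -⟩ := overlaps_iff_exists.1 hAB
  exact (subset_or_subset_of_not_overlaps hBC haB (hAC haA)).resolve_right
    fun hCB => hAB.2.1 (hAC.trans hCB)

theorem subset_of_subset_insert (hBC : Overlaps B C) (hAC : ¬ Overlaps A C)
    (hBA : B ⊆ insert y A) (hx : x ∈ A) (hxy : x ∈ C ↔ y ∈ C) : C ⊆ A := by
  by_cases hyC : y ∈ C
  · refine (subset_or_subset_of_not_overlaps hAC hx (hxy.2 hyC)).resolve_left fun hsub => ?_
    exact hBC.2.1 (hBA.trans (Finset.insert_subset hyC hsub))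
  · obtain ⟨⟨t, htB, htC⟩, -⟩ := overlaps_iff_exists.1 hBC
    have hty : t ≠ y := fun h => hyC (h ▸ htC)
    have htA : t ∈ A := Finset.mem_of_mem_insert_of_ne (hBA htB) hty
    exact (subset_or_subset_of_not_overlaps hAC htA htC).resolve_left
      fun hsub => hyC (hxy.1 (hsub hx))

theorem of_erase (h : Overlaps (A.erase z) (B.erase z)) : Overlaps A B := by
  simp only [overlaps_iff_exists, Finset.mem_erase] at h ⊢
  grind

theorem erase_of_mem_iff_mem (h : Overlaps A B) (hxz : x ≠ z) (hA : x ∈ A ↔ z ∈ A)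
    (hB : x ∈ B ↔ z ∈ B) : Overlaps (A.erase z) (B.erase z) := by
  simp only [overlaps_iff_exists, Finset.mem_erase] at h ⊢
  grind

theorem erase_of_notMem_left (h : Overlaps A B) (hz : z ∉ A) (haB : a ∈ B) (haA : a ∉ A)
    (haz : a ≠ z) : Overlaps (A.erase z) (B.erase z) := by
  simp only [overlaps_iff_exists, Finset.mem_erase] at h ⊢
  grind

theorem erase_of_mem_of_mem (h : Overlaps A B) (hzA : z ∈ A) (hzB : z ∈ B) (haA : a ∈ A)
    (haB : a ∈ B) (haz : a ≠ z) : Overlaps (A.erase z) (B.erase z) := by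
  simp only [overlaps_iff_exists, Finset.mem_erase] at h ⊢
  grind

end Overlaps

end Overlaps

/-- The sets `S 0, …, S (n - 1)` overlap exactly as the vertices of a path on `n` vertices are
adjacent. Indexing by `ℕ` instead of `Fin n` lets one delete an end or reverse the path without
casts; the sets `S i` with `n ≤ i` are irrelevant. -/
structure IsOverlapPath (n : ℕ) (S : ℕ → Finset ℕ) : Prop where
  overlaps : ∀ i, i + 1 < n → Overlaps (S i) (S (i + 1))
  not_overlaps : ∀ i j, i + 1 < j → j < n → ¬ Overlaps (S i) (S j)

namespace IsOverlapPath

variable {n : ℕ} {S : ℕ → Finset ℕ}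

theorem tail (h : IsOverlapPath (n + 1) S) : IsOverlapPath n (fun i => S (i + 1)) where
  overlaps i hi := h.overlaps (i + 1) (by lia)
  not_overlaps i j hij hj := h.not_overlaps (i + 1) (j + 1) (by lia) (by lia)

theorem reverse (h : IsOverlapPath (n + 1) S) : IsOverlapPath (n + 1) (fun i => S (n - i)) where
  overlaps i hi := by
    have hsucc : n - (i + 1) + 1 = n - i := by lia
    exact (hsucc ▸ h.overlaps (n - (i + 1)) (by lia)).symm
  not_overlaps i j hij hj hov :=
    h.not_overlaps (n - j) (n - i) (by lia) (by lia) hov.symm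

theorem erase {z : ℕ} (h : IsOverlapPath n S)
    (hz : ∀ i, i + 1 < n → Overlaps ((S i).erase z) ((S (i + 1)).erase z)) :
    IsOverlapPath n (fun i => (S i).erase z) where
  overlaps := hz
  not_overlaps i j hij hj hov := h.not_overlaps i j hij hj hov.of_erase

theorem subset_of_le {i j k : ℕ} (h : IsOverlapPath n S) (hki : k + 1 < i) (hij : i ≤ j)
    (hj : j < n) (hsub : S i ⊆ S k) : S j ⊆ S k := by
  induction j, hij using Nat.le_induction with
  | base => exact hsub
  | succ j hij ih =>
    exact (h.overlaps j hj).subset_of_subset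
      (fun hov => h.not_overlaps k (j + 1) (by lia) hj hov.symm) (ih (by lia))

theorem erase_of_subset_insert {x y : ℕ} (h : IsOverlapPath n S) (hn : 3 ≤ n)
    (hx : x ∈ S 0) (hy : y ∉ S 0) (hxy : ∀ i, 0 < i → i < n → (x ∈ S i ↔ y ∈ S i))
    (h1 : S 1 ⊆ insert y (S 0)) : IsOverlapPath n (fun i => (S i).erase x) := by
  have hy1 : y ∈ S 1 := by
    obtain ⟨-, -, w, hw1, hw0⟩ := overlaps_iff_exists.1 (h.overlaps 0 (by lia))
    exact (Finset.mem_insert.1 (h1 hw1)).resolve_right hw0 ▸ hw1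
  have hx1 : x ∈ S 1 := (hxy 1 (by lia) (by lia)).2 hy1
  have h2 : S 2 ⊆ S 0 := (h.overlaps 1 (by lia)).subset_of_subset_insert
    (h.not_overlaps 0 2 (by lia) (by lia)) h1 hx (hxy 2 (by lia) (by lia))
  have hyS : ∀ i, 2 ≤ i → i < n → y ∉ S i := fun i hi hin hyi =>
    hy (h.subset_of_le (by lia) hi hin h2 hyi)
  have hxS : ∀ i, 2 ≤ i → i < n → x ∉ S i := fun i hi hin =>
    mt (hxy i (by lia) hin).1 (hyS i hi hin)
  refine h.erase fun i hi => ?_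
  match i with
  | 0 =>
    obtain ⟨⟨t, ht1, ht2⟩, -⟩ := overlaps_iff_exists.1 (h.overlaps 1 (by lia))
    have htx : t ≠ x := fun htx => hxS 2 le_rfl (by lia) (htx ▸ ht2)
    exact (h.overlaps 0 hi).erase_of_mem_of_mem hx hx1 (h2 ht2) ht1 htx
  | 1 =>
    have hyx : y ≠ x := fun hyx => hy (hyx ▸ hx)
    exact ((h.overlaps 1 hi).symm.erase_of_notMem_left (hxS 2 le_rfl hi) hy1
      (hyS 2 le_rfl hi) hyx).symm
  | i + 2 =>
    rw [Finset.erase_eq_of_notMem (hxS (i + 2) (by lia) (by lia)),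
      Finset.erase_eq_of_notMem (hxS (i + 2 + 1) (by lia) hi)]
    exact h.overlaps (i + 2) hi

theorem erase_of_not_subset_insert {x y : ℕ} (h : IsOverlapPath n S)
    (hx : x ∈ S 0) (hy : y ∉ S 0) (hxy : ∀ i, 0 < i → i < n → (x ∈ S i ↔ y ∈ S i))
    (h1 : ¬ S 1 ⊆ insert y (S 0)) : IsOverlapPath n (fun i => (S i).erase y) := by
  obtain ⟨w, hw1, hw⟩ := Finset.not_subset.1 h1
  obtain ⟨hwy, hw0⟩ : w ≠ y ∧ w ∉ S 0 := by rwa [Finset.mem_insert, not_or] at hw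
  refine h.erase fun i hi => ?_
  obtain rfl | hi0 := i.eq_zero_or_pos
  · exact (h.overlaps 0 hi).erase_of_notMem_left hy hw1 hw0 hwy
  · have hne : x ≠ y := fun hne => hy (hne ▸ hx)
    exact (h.overlaps i hi).erase_of_mem_iff_mem hne (hxy i hi0 (by lia))
      (hxy (i + 1) (by lia) hi)

theorem exists_mem_erase_tail (h : IsOverlapPath (n + 1) S) (hn : 3 ≤ n)
    (h0 : ∀ j, 1 < j → j ≤ n → ¬ S j ⊆ S 0) :
    ∃ z ∈ S 0, IsOverlapPath n (fun i => (S (i + 1)).erase z) := by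
  obtain ⟨⟨x, hx0, hx1⟩, ⟨y, hy0, hy1⟩, -⟩ := overlaps_iff_exists.1 (h.overlaps 0 (by lia))
  have hxy : ∀ i, 0 < i → i < n → (x ∈ S (i + 1) ↔ y ∈ S (i + 1)) := fun i hi hin =>
    mem_iff_mem_of_not_overlaps (h.not_overlaps 0 (i + 1) (by lia) (by lia))
      (h0 (i + 1) (by lia) hin) hx0 hy0
  by_cases h12 : S 2 ⊆ insert y (S 1)
  · exact ⟨x, hx0, h.tail.erase_of_subset_insert hn hx1 hy1 hxy h12⟩
  · exact ⟨y, hy0, h.tail.erase_of_not_subset_insert hx1 hy1 hxy h12⟩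

theorem forall_not_subset_first_or_last (h : IsOverlapPath (n + 1) S) (hn : 3 ≤ n) :
    (∀ j, 1 < j → j ≤ n → ¬ S j ⊆ S 0) ∨ ∀ j, 1 < j → j ≤ n → ¬ S (n - j) ⊆ S n := by
  by_contra! hcon
  obtain ⟨⟨i, hi, hin, hsub⟩, j, hj, hjn, hsub'⟩ := hcon
  have last_subset : S n ⊆ S 0 := h.subset_of_le (by lia) hin (by lia) hsub
  have first_subset : S 0 ⊆ S n := by
    simpa only [Nat.sub_self, Nat.sub_zero] using
      h.reverse.subset_of_le (k := 0) (by lia) hjn (by lia) hsub'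
  have heq : S 0 = S n := first_subset.antisymm last_subset
  exact h.not_overlaps 1 n (by lia) (by lia) (heq ▸ (h.overlaps 0 (by lia)).symm)

theorem le_card {U : Finset ℕ} (h : IsOverlapPath n S) (hn : 3 ≤ n) (hU : ∀ i < n, S i ⊆ U) :
    n ≤ U.card := by
  induction n, hn using Nat.le_induction generalizing S U with
  | base =>
    calc 3 ≤ (S 0 ∪ S 1).card := (h.overlaps 0 (by lia)).three_le_card_union
      _ ≤ U.card := Finset.card_le_card (Finset.union_subset (hU 0 (by lia)) (hU 1 (by lia)))
  | succ n hn ih =>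
    wlog h0 : ∀ j, 1 < j → j ≤ n → ¬ S j ⊆ S 0 generalizing S
    · exact this h.reverse (fun i _ => hU (n - i) (by lia))
        ((h.forall_not_subset_first_or_last hn).resolve_left h0)
    obtain ⟨z, hz, hpath⟩ := h.exists_mem_erase_tail hn h0
    calc n + 1 ≤ (U.erase z).card + 1 := Nat.succ_le_succ <|
          ih hpath fun i hi => Finset.erase_subset_erase z (hU (i + 1) (by lia))
      _ = U.card := Finset.card_erase_add_one (hU 0 (by lia) hz)

theorem isOverlapRep (h : IsOverlapPath n S) (hn : 2 ≤ n) :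
    IsOverlapRep (SimpleGraph.pathGraph n) (fun v => S v) := by
  refine ⟨fun ⟨v, hv⟩ => ?_, fun ⟨u, hu⟩ ⟨v, hv⟩ => ?_⟩
  · cases v with
    | zero => exact (h.overlaps 0 hn).nonempty_left
    | succ v => exact (h.overlaps v hv).symm.nonempty_left
  · rw [SimpleGraph.pathGraph_adj]
    refine ⟨?_, fun hov => ?_⟩
    · rintro (rfl | rfl)
      · exact h.overlaps u hv
      · exact (h.overlaps v hu).symm
    · have not_lt : ¬ u + 1 < v := fun huv => h.not_overlaps u v huv hv hov
      have not_gt : ¬ v + 1 < u := fun hvu => h.not_overlaps v u hvu hu hov.symm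
      have ne : u ≠ v := by rintro rfl; exact not_overlaps_self hov
      lia

end IsOverlapPath

theorem IsOverlapRep.isOverlapPath {n : ℕ} {S : ℕ → Finset ℕ}
    (h : IsOverlapRep (SimpleGraph.pathGraph n) (fun v => S v)) : IsOverlapPath n S where
  overlaps i hi :=
    (h.2 ⟨i, by lia⟩ ⟨i + 1, hi⟩).1 (SimpleGraph.pathGraph_adj.2 (.inl rfl))
  not_overlaps i j hij hj hov := by
    have hadj := SimpleGraph.pathGraph_adj.1 ((h.2 ⟨i, by lia⟩ ⟨j, hj⟩).2 hov)
    lia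

theorem IsOverlapRep.le_card_of_pathGraph {n : ℕ} {S : Fin n → Finset ℕ} {U : Finset ℕ}
    (h : IsOverlapRep (SimpleGraph.pathGraph n) S) (hn : 3 ≤ n) (hU : ∀ v, S v ⊆ U) :
    n ≤ U.card := by
  obtain ⟨T, rfl⟩ : ∃ T : ℕ → Finset ℕ, S = fun v : Fin n => T v :=
    ⟨Function.extend Fin.val S fun _ => ∅,
      funext fun v => (Fin.val_injective.extend_apply S _ v).symm⟩
  exact h.isOverlapPath.le_card hn fun i hi => hU ⟨i, hi⟩

section OverlapNumber

variable {V : Type*} {G : SimpleGraph V} {S : V → Finset ℕ}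

theorem IsOverlapRep.overlapNumber_le {U : Finset ℕ} (h : IsOverlapRep G S)
    (hU : ∀ v, S v ⊆ U) : overlapNumber G ≤ U.card :=
  calc overlapNumber G ≤ (⋃ v, (S v : Set ℕ)).ncard := Nat.sInf_le ⟨S, h, rfl⟩
    _ ≤ (U : Set ℕ).ncard := Set.ncard_le_ncard (Set.iUnion_subset hU) U.finite_toSet
    _ = U.card := Set.ncard_coe_finset U

theorem IsOverlapRep.le_overlapNumber [Finite V] {k : ℕ} (h : IsOverlapRep G S)
    (hk : ∀ (T : V → Finset ℕ) (U : Finset ℕ), IsOverlapRep G T → (∀ v, T v ⊆ U) → k ≤ U.card) :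
    k ≤ overlapNumber G := by
  refine le_csInf ⟨_, S, h, rfl⟩ ?_
  rintro _ ⟨T, hT, rfl⟩
  have hfin : (⋃ v, (T v : Set ℕ)).Finite := Set.finite_iUnion fun v => (T v).finite_toSet
  rw [Set.ncard_eq_toFinset_card _ hfin]
  exact hk T hfin.toFinset hT fun v =>
    hfin.subset_toFinset.2 (Set.subset_iUnion (fun v => (T v : Set ℕ)) v)

end OverlapNumber

/-- A representation of the path on `n` vertices with elements `0, …, n - 1`: vertex `i < n - 1`
gets the edge `{i, i + 1}`, and the last vertex gets all elements except `n - 1`, hence it overlaps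
the last of these edges and contains all the others. -/
def pathOverlapRep (n i : ℕ) : Finset ℕ :=
  if i + 1 < n then {i, i + 1} else Finset.range (n - 1)

theorem mem_pathOverlapRep {n i a : ℕ} : a ∈ pathOverlapRep n i ↔
    if i + 1 < n then a = i ∨ a = i + 1 else a + 1 < n := by
  unfold pathOverlapRep
  split_ifs
  · simp only [Finset.mem_insert, Finset.mem_singleton]
  · rw [Finset.mem_range, Nat.lt_sub_iff_add_lt]

theorem pathOverlapRep_subset_range {n i : ℕ} : pathOverlapRep n i ⊆ Finset.range n := by
  intro a ha
  rw [mem_pathOverlapRep] at ha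
  rw [Finset.mem_range]
  split_ifs at ha <;> lia

theorem isOverlapPath_pathOverlapRep {n : ℕ} (hn : 3 ≤ n) :
    IsOverlapPath n (pathOverlapRep n) where
  overlaps i hi := by
    simp only [overlaps_iff_exists, mem_pathOverlapRep]
    by_cases hlast : i + 2 < n
    · exact ⟨⟨i + 1, by grind⟩, ⟨i, by grind⟩, ⟨i + 2, by grind⟩⟩
    · exact ⟨⟨i, by grind⟩, ⟨i + 1, by grind⟩, ⟨0, by grind⟩⟩
  not_overlaps i j hij hj := by
    simp only [overlaps_iff_exists, mem_pathOverlapRep]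
    grind

/-- For `n ≥ 3`, the overlap number of the path on `n` vertices is `n`. -/
theorem overlapNumber_path (n : ℕ) (hn : 3 ≤ n) :
    overlapNumber (SimpleGraph.pathGraph n) = n := by
  have hrep : IsOverlapRep (SimpleGraph.pathGraph n) (fun v => pathOverlapRep n v) :=
    (isOverlapPath_pathOverlapRep hn).isOverlapRep (by lia)
  apply le_antisymm
  · calc overlapNumber (SimpleGraph.pathGraph n) ≤ (Finset.range n).card :=
          hrep.overlapNumber_le fun _ => pathOverlapRep_subset_range
      _ = n := Finset.card_range n
  · exact hrep.le_overlapNumber fun _ _ hT hU => hT.le_card_of_pathGraph hn hU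
end

section
/- If T is a caterpillar whose spine (the path formed by the non-leaf vertices) contains k ≥ 1 vertices, then the overlap number of T equals k + 2. -/
/-! Lower bound: the spine together with a leaf at each end is an induced path on `k + 2` vertices,
and representing a path on `n ≥ 3` vertices takes at least `n` elements. For the latter, let `D` be
the set of the last vertex. Reversing the path if necessary, no set of a vertex far from the last
one lies in `D`, so each of these sets contains `D` or misses it. None of them separates elements
of `D`, and therefore some element of `D` can be deleted together with the last vertex; induct.

Upper bound: number the spine from `0`; give spine vertex `i` the set `{i + 1, i + 2}` and each leaf
attached to it the set `{0, …, i + 1}`. -/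

open SimpleGraph

section Overlaps

variable {A B C D U : Finset ℕ} {x y : ℕ}

theorem overlaps_iff : Overlaps A B ↔
    (∃ x ∈ A, x ∈ B) ∧ (∃ x ∈ A, x ∉ B) ∧ ∃ x ∈ B, x ∉ A := by
  simp only [Overlaps, Finset.Nonempty, Finset.mem_inter, Finset.not_subset]

theorem overlaps_comm : Overlaps A B ↔ Overlaps B A := by
  simp only [Overlaps, Finset.inter_comm A B, and_comm]

theorem not_overlaps_iff : ¬ Overlaps A B ↔ Disjoint A B ∨ A ⊆ B ∨ B ⊆ A := by
  simp only [Overlaps, Finset.disjoint_iff_inter_eq_empty, ← Finset.not_nonempty_iff_eq_empty]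
  tauto

theorem Overlaps.three_le_card (h : Overlaps A B) (hA : A ⊆ U) (hB : B ⊆ U) : 3 ≤ U.card := by
  obtain ⟨⟨x, hxA, hxB⟩, ⟨y, hyA, hyB⟩, ⟨z, hzB, hzA⟩⟩ := overlaps_iff.1 h
  exact Finset.two_lt_card.2 ⟨x, hA hxA, y, hA hyA, z, hB hzB, by grind⟩

theorem Overlaps.of_erase_s16 (h : Overlaps (A.erase x) (B.erase x)) : Overlaps A B := by
  rw [overlaps_iff] at h ⊢
  grind

theorem Overlaps.erase (h : Overlaps A B) (hxy : x ≠ y) (hA : x ∈ A ↔ y ∈ A)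
    (hB : x ∈ B ↔ y ∈ B) : Overlaps (A.erase x) (B.erase x) := by
  have hswap : ∀ a, ∃ b ≠ x, (b ∈ A ↔ a ∈ A) ∧ (b ∈ B ↔ a ∈ B) := fun a => by
    rcases eq_or_ne a x with rfl | hax
    · exact ⟨y, hxy.symm, hA.symm, hB.symm⟩
    · exact ⟨a, hax, Iff.rfl, Iff.rfl⟩
  rw [overlaps_iff] at h ⊢
  obtain ⟨⟨a, ha⟩, ⟨b, hb⟩, ⟨c, hc⟩⟩ := h
  obtain ⟨a', ha'⟩ := hswap a
  obtain ⟨b', hb'⟩ := hswap b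
  obtain ⟨c', hc'⟩ := hswap c
  exact ⟨⟨a', by grind⟩, ⟨b', by grind⟩, c', by grind⟩

theorem Overlaps.exists_erase (hBC : Overlaps B C) (hCD : Overlaps C D)
    (hBD : D ⊂ B ∨ Disjoint B D) :
    ∃ x ∈ D, (∃ y ∈ D, x ≠ y) ∧ Overlaps (B.erase x) (C.erase x) := by
  obtain ⟨⟨x, hxC, hxD⟩, -, y, hyD, hyC⟩ := overlaps_iff.1 hCD
  have hxy : x ≠ y := by grind
  rcases hBD with hDB | hDB
  · obtain ⟨b, hbB, hbD⟩ := Finset.exists_of_ssubset hDB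
    have hDB := hDB.subset
    obtain ⟨-, -, c, hcC, hcB⟩ := overlaps_iff.1 hBC
    by_cases hbC : b ∈ C
    · exact ⟨x, hxD, ⟨y, hyD, hxy⟩, overlaps_iff.2 ⟨⟨b, by grind⟩, ⟨y, by grind⟩, c, by grind⟩⟩
    · exact ⟨y, hyD, ⟨x, hxD, hxy.symm⟩,
        overlaps_iff.2 ⟨⟨x, by grind⟩, ⟨b, by grind⟩, c, by grind⟩⟩
  · have hyB : y ∉ B := Finset.disjoint_right.1 hDB hyD
    exact ⟨y, hyD, ⟨x, hxD, hxy.symm⟩, by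
      rwa [Finset.erase_eq_of_notMem hyB, Finset.erase_eq_of_notMem hyC]⟩

theorem not_overlaps_range (i j : ℕ) : ¬ Overlaps (Finset.range i) (Finset.range j) := by
  rw [not_overlaps_iff, Finset.range_subset_range, Finset.range_subset_range]
  exact .inr (le_total i j)

theorem overlaps_range_pair_iff {i j : ℕ} :
    Overlaps (Finset.range (i + 2)) {j + 1, j + 2} ↔ i = j := by
  simp only [overlaps_iff, Finset.mem_range, Finset.mem_insert, Finset.mem_singleton]
  constructor
  · grind
  · rintro rfl
    exact ⟨⟨i + 1, by omega⟩, ⟨0, by omega⟩, ⟨i + 2, by omega⟩⟩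

theorem overlaps_pair_pair_iff {i j : ℕ} :
    Overlaps {i + 1, i + 2} {j + 1, j + 2} ↔ i + 1 = j ∨ j + 1 = i := by
  simp only [overlaps_iff, Finset.mem_insert, Finset.mem_singleton]
  constructor
  · grind
  · rintro (rfl | rfl)
    · exact ⟨⟨i + 2, by omega⟩, ⟨i + 1, by omega⟩, ⟨i + 3, by omega⟩⟩
    · exact ⟨⟨j + 2, by omega⟩, ⟨j + 3, by omega⟩, ⟨j + 1, by omega⟩⟩

end Overlaps

section IsOverlapRep

variable {V W : Type*} {G : SimpleGraph V} {S : V → Finset ℕ} {u v w x y : V}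

theorem isOverlapRep_of_adj_iff [Nontrivial V] (hG : G.Preconnected)
    (h : ∀ u v, G.Adj u v ↔ Overlaps (S u) (S v)) : IsOverlapRep G S := by
  refine ⟨fun v => ?_, h⟩
  obtain ⟨w, hvw⟩ := hG.exists_adj_of_nontrivial v
  exact ((h v w).1 hvw).1.mono Finset.inter_subset_left

theorem IsOverlapRep.comap (hS : IsOverlapRep G S) (f : W → V) :
    IsOverlapRep (G.comap f) (S ∘ f) :=
  ⟨fun i => hS.1 (f i), fun i j => hS.2 (f i) (f j)⟩

theorem IsOverlapRep.adj_congr (hS : IsOverlapRep G S) (huv : S u = S v) :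
    G.Adj u w ↔ G.Adj v w := by
  rw [hS.2, hS.2, huv]

theorem IsOverlapRep.subset_of_adj (hS : IsOverlapRep G S) (hxy : G.Adj x y) (hxv : ¬ G.Adj x v)
    (hyv : S y ⊆ S v) : S x ⊆ S v := by
  obtain ⟨hne, -, hyx⟩ := (hS.2 x y).1 hxy
  rw [hS.2, not_overlaps_iff] at hxv
  rcases hxv with hdisj | hsub | hsup
  · exact absurd (hdisj.mono_right hyv) (Finset.not_disjoint_iff_nonempty_inter.2 hne)
  · exact hsub
  · exact absurd (hyv.trans hsup) hyx

theorem IsOverlapRep.exists_adj_iff_overlaps_erase (hS : IsOverlapRep G S) (huv : u ≠ v)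
    (hw : ∀ t, G.Adj w t ↔ t = u ∨ t = v) (hv : ∀ t, G.Adj v t → t = w)
    (hsub : ∀ t, t ≠ v → t ≠ w → ¬ S t ⊆ S v) :
    ∃ x ∈ S v, ∀ s t, s ≠ v → t ≠ v →
      (G.Adj s t ↔ Overlaps ((S s).erase x) ((S t).erase x)) := by
  have hdich : ∀ t, t ≠ v → t ≠ w → S v ⊂ S t ∨ Disjoint (S t) (S v) := by
    intro t htv htw
    have hnov : ¬ Overlaps (S t) (S v) := fun h => htw (hv t ((hS.2 t v).2 h).symm)
    rcases not_overlaps_iff.1 hnov with h | h | h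
    · exact .inr h
    · exact absurd h (hsub t htv htw)
    · exact .inl ⟨h, hsub t htv htw⟩
  have hwu : G.Adj w u := (hw u).2 (.inl rfl)
  have hwv : G.Adj w v := (hw v).2 (.inr rfl)
  -- Only `S w` can separate elements of `S v`, so just the overlap of `S u` and `S w` constrains
  -- the choice of `x`; every other overlap survives because `x` has a twin `y`.
  obtain ⟨x, hx, ⟨y, hy, hxy⟩, huw⟩ := Overlaps.exists_erase ((hS.2 u w).1 hwu.symm)
    ((hS.2 w v).1 hwv) (hdich u huv hwu.ne')
  have htwin : ∀ t, t ≠ v → t ≠ w → (x ∈ S t ↔ y ∈ S t) := by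
    intro t htv htw
    rcases hdich t htv htw with h | h
    · exact iff_of_true (h.subset hx) (h.subset hy)
    · exact iff_of_false (Finset.disjoint_right.1 h hx) (Finset.disjoint_right.1 h hy)
  refine ⟨x, hx, fun s t hsv htv => ⟨fun hst => ?_, fun h => (hS.2 s t).2 h.of_erase_s16⟩⟩
  by_cases hsw : s = w
  · obtain rfl : t = u := ((hw t).1 (hsw ▸ hst)).resolve_right htv
    exact overlaps_comm.1 (hsw ▸ huw)
  by_cases htw : t = w
  · obtain rfl : s = u := ((hw s).1 (htw ▸ hst).symm).resolve_right hsv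
    exact htw ▸ huw
  exact ((hS.2 s t).1 hst).erase hxy (htwin s hsv hsw) (htwin t htv htw)

theorem overlapNumber_eq_card [Finite V] {U : Finset ℕ} (hS : IsOverlapRep G S)
    (hSU : ∀ v, S v ⊆ U)
    (hmin : ∀ S' U', IsOverlapRep G S' → (∀ v, S' v ⊆ U') → U.card ≤ U'.card) :
    overlapNumber G = U.card := by
  have hmem : (⋃ v, (S v : Set ℕ)).ncard ∈
      {n | ∃ S : V → Finset ℕ, IsOverlapRep G S ∧ (⋃ v, (S v : Set ℕ)).ncard = n} := ⟨S, hS, rfl⟩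
  refine le_antisymm ((Nat.sInf_le hmem).trans ?_) (le_csInf ⟨_, hmem⟩ ?_)
  · rw [← Set.ncard_coe_finset U]
    exact Set.ncard_le_ncard (Set.iUnion_subset fun v => Finset.coe_subset.2 (hSU v))
  · rintro _ ⟨S', hS', rfl⟩
    have hfin : (⋃ v, (S' v : Set ℕ)).Finite := Set.finite_iUnion fun v => (S' v).finite_toSet
    rw [Set.ncard_eq_toFinset_card _ hfin]
    refine hmin S' _ hS' fun v a ha => ?_
    rw [Set.Finite.mem_toFinset]
    exact Set.mem_iUnion_of_mem v ha

end IsOverlapRep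

section Path

variable {n : ℕ}

theorem comap_rev_pathGraph (n : ℕ) : (pathGraph n).comap Fin.rev = pathGraph n := by
  ext i j
  simp only [comap_adj, pathGraph_adj, Fin.val_rev]
  omega

theorem IsOverlapRep.zero_subset_last {A : Fin (n + 1) → Finset ℕ}
    (hA : IsOverlapRep (pathGraph (n + 1)) A) (j : ℕ) (hj : j + 1 < n)
    (h : A ⟨j, by omega⟩ ⊆ A (Fin.last n)) : A 0 ⊆ A (Fin.last n) := by
  induction j with
  | zero => exact h
  | succ j ih =>
    refine ih (by omega) (hA.subset_of_adj (pathGraph_adj.2 (.inl rfl)) ?_ h)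
    simp only [pathGraph_adj, Fin.val_last]
    omega

theorem IsOverlapRep.exists_pathGraph_erase {A : Fin (n + 4) → Finset ℕ}
    (hA : IsOverlapRep (pathGraph (n + 4)) A) (h0 : ¬ A 0 ⊆ A (Fin.last (n + 3))) :
    ∃ x ∈ A (Fin.last (n + 3)),
      IsOverlapRep (pathGraph (n + 3)) fun i => (A i.castSucc).erase x := by
  obtain ⟨x, hx, hadj⟩ := hA.exists_adj_iff_overlaps_erase (u := ⟨n + 1, by omega⟩)
    (v := Fin.last (n + 3)) (w := ⟨n + 2, by omega⟩)
    (by simp [Fin.ext_iff])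
    (fun t => by simp only [pathGraph_adj, Fin.ext_iff, Fin.val_last]; omega)
    (fun t => by simp only [pathGraph_adj, Fin.ext_iff, Fin.val_last]; omega)
    (fun t htv htw h => h0 <| hA.zero_subset_last t
      (by simp only [ne_eq, Fin.ext_iff, Fin.val_last] at htv htw; omega) h)
  refine ⟨x, hx, isOverlapRep_of_adj_iff (pathGraph_preconnected _) fun i j => ?_⟩
  rw [← hadj _ _ (Fin.castSucc_ne_last i) (Fin.castSucc_ne_last j)]
  simp only [pathGraph_adj, Fin.val_castSucc]

theorem IsOverlapRep.le_card_of_pathGraph_s16 {A : Fin (n + 3) → Finset ℕ} {U : Finset ℕ}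
    (hA : IsOverlapRep (pathGraph (n + 3)) A) (hU : ∀ i, A i ⊆ U) : n + 3 ≤ U.card := by
  induction n generalizing U with
  | zero => exact ((hA.2 0 1).1 (pathGraph_adj.2 (.inl rfl))).three_le_card (hU 0) (hU 1)
  | succ n ih =>
    wlog h0 : ¬ A 0 ⊆ A (Fin.last (n + 3)) generalizing A
    · have hrev := hA.comap Fin.rev
      rw [comap_rev_pathGraph] at hrev
      refine this hrev (fun i => hU i.rev) fun hlast => ?_
      have heq : A 0 = A (Fin.last (n + 3)) :=
        (not_not.1 h0).antisymm (by simpa using hlast)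
      have := hA.adj_congr (w := 1) heq
      simp [pathGraph_adj] at this
    obtain ⟨x, hx, hA'⟩ := hA.exists_pathGraph_erase h0
    have hcard := ih hA' fun i => Finset.erase_subset_erase x (hU i.castSucc)
    rw [← Finset.card_erase_add_one (hU _ hx)]
    omega

theorem comap_cons_eq_pathGraph {V : Type*} {G : SimpleGraph V} {f : Fin (n + 1) → V} {w : V}
    (hf : G.comap f = pathGraph (n + 1)) (hw : ∀ i, G.Adj w (f i) ↔ i = 0) :
    G.comap (Fin.cons w f : Fin (n + 2) → V) = pathGraph (n + 2) := by
  have hf' : ∀ i j, G.Adj (f i) (f j) ↔ (pathGraph (n + 1)).Adj i j := fun i j => by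
    rw [← hf, comap_adj]
  have hw' : ∀ i, G.Adj (f i) w ↔ i = 0 := fun i => (G.adj_comm _ _).trans (hw i)
  ext i j
  cases i using Fin.cases <;> cases j using Fin.cases <;>
    simp only [comap_adj, Fin.cons_zero, Fin.cons_succ, SimpleGraph.irrefl, hw, hw', hf',
      pathGraph_adj, Fin.val_zero, Fin.val_succ, Fin.ext_iff] <;>
    omega

end Path

section Spine

variable {V : Type*} {G : SimpleGraph V} {s : Set V} {k : ℕ} {v : V}

theorem two_le_degree_iff_nontrivial_neighborSet [Fintype (G.neighborSet v)] :
    2 ≤ G.degree v ↔ (G.neighborSet v).Nontrivial := by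
  rw [← card_neighborFinset_eq_degree, Nat.succ_le_iff, Finset.one_lt_card_iff_nontrivial,
    Finset.Nontrivial, coe_neighborFinset]

theorem exists_neighborSet_eq_singleton (hG : G.Preconnected)
    (hne : ∃ u, (G.neighborSet u).Nontrivial) (hv : ¬ (G.neighborSet v).Nontrivial) :
    ∃ w, (G.neighborSet w).Nontrivial ∧ G.neighborSet v = {w} := by
  obtain ⟨u, hu⟩ := hne
  obtain ⟨p, hp⟩ := hG.exists_isPath v u
  have hadj : ∃ w, (G.neighborSet w).Nontrivial ∧ G.Adj v w := by
    match p, hp with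
    | .nil, _ => exact absurd hu hv
    | .cons hvw .nil, _ => exact ⟨u, hu, hvw⟩
    | .cons (v := w) hvw (.cons (v := x) hwx q), hp =>
      have hvx : v ≠ x := by
        rintro rfl
        simp at hp
      exact ⟨w, ⟨v, hvw.symm, x, hwx, hvx⟩, hvw⟩
  obtain ⟨w, hw, hvw⟩ := hadj
  exact ⟨w, hw, (Set.not_nontrivial_iff.1 hv).eq_singleton_of_mem hvw⟩

open Classical in
/-- The optimal representation of a caterpillar with spine `s`. Spine positions start at `0`, and
`idx v` is the position of `v` if `v` is on the spine, and that of its neighbour if `v` is a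
leaf. -/
noncomputable def caterpillarRep (s : Set V) (idx : V → ℕ) (v : V) : Finset ℕ :=
  if v ∈ s then {idx v + 1, idx v + 2} else Finset.range (idx v + 2)

theorem isOverlapRep_caterpillarRep {idx : V → ℕ}
    (h_spine : ∀ u ∈ s, ∀ v ∈ s, G.Adj u v ↔ idx u + 1 = idx v ∨ idx v + 1 = idx u)
    (h_leaf_spine : ∀ u ∉ s, ∀ v ∈ s, G.Adj u v ↔ idx u = idx v)
    (h_leaf : ∀ u ∉ s, ∀ v ∉ s, ¬ G.Adj u v) :
    IsOverlapRep G (caterpillarRep s idx) := by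
  refine ⟨fun v => ?_, fun u v => ?_⟩
  · by_cases hv : v ∈ s <;> simp [caterpillarRep, hv]
  · by_cases hu : u ∈ s <;> by_cases hv : v ∈ s <;>
      simp only [caterpillarRep, hu, hv, if_true, if_false]
    · rw [overlaps_pair_pair_iff, h_spine u hu v hv]
    · rw [overlaps_comm, overlaps_range_pair_iff, G.adj_comm, h_leaf_spine v hv u hu]
    · rw [overlaps_range_pair_iff, h_leaf_spine u hu v hv]
    · exact iff_of_false (h_leaf u hu v hv) (not_overlaps_range _ _)

theorem caterpillarRep_subset_range {idx : V → ℕ} (h : idx v < k) :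
    caterpillarRep s idx v ⊆ Finset.range (k + 2) := by
  unfold caterpillarRep
  split_ifs <;> grind

theorem exists_spine_projection (hleaf : ∀ v ∉ s, ∃ w ∈ s, G.neighborSet v = {w}) :
    ∃ π : V → s, (∀ v ∈ s, (π v : V) = v) ∧ ∀ v ∉ s, ∀ x, G.Adj v x ↔ x = π v := by
  have hπ : ∀ v, ∃ w : s, (v ∈ s → (w : V) = v) ∧ (v ∉ s → G.neighborSet v = {(w : V)}) := by
    intro v
    by_cases hv : v ∈ s
    · exact ⟨⟨v, hv⟩, fun _ => rfl, fun h => absurd hv h⟩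
    · obtain ⟨w, hw, hvw⟩ := hleaf v hv
      exact ⟨⟨w, hw⟩, fun h => absurd h hv, fun _ => hvw⟩
  choose π hπ_spine hπ_leaf using hπ
  exact ⟨π, hπ_spine, fun v hv x => by
    rw [← mem_neighborSet, hπ_leaf v hv, Set.mem_singleton_iff]⟩

theorem exists_isOverlapRep_subset_range (e : G.induce s ↪g pathGraph k)
    (hleaf : ∀ v ∉ s, ∃ w ∈ s, G.neighborSet v = {w}) :
    ∃ S, IsOverlapRep G S ∧ ∀ v, S v ⊆ Finset.range (k + 2) := by
  obtain ⟨π, hπ_spine, hπ_leaf⟩ := exists_spine_projection hleaf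
  refine ⟨caterpillarRep s fun v => e (π v), isOverlapRep_caterpillarRep ?_ ?_ ?_,
    fun v => caterpillarRep_subset_range (e (π v)).2⟩
  · intro u hu v hv
    rw [← pathGraph_adj, e.map_adj_iff, comap_adj]
    simp only [Function.Embedding.subtype_apply, hπ_spine u hu, hπ_spine v hv]
  · intro u hu v hv
    rw [hπ_leaf u hu, Fin.val_inj, e.injective.eq_iff, Subtype.ext_iff, hπ_spine v hv, eq_comm]
  · intro u hu v hv h
    exact hv ((hπ_leaf u hu v).1 h ▸ (π u).2)

theorem exists_neighborSet_eq_singleton_of_end (hleaf : ∀ v ∉ s, ∃ w ∈ s, G.neighborSet v = {w})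
    (hv : (G.neighborSet v).Nontrivial) (hend : (G.neighborSet v ∩ s).Subsingleton) :
    ∃ a ∉ s, G.neighborSet a = {v} := by
  obtain ⟨a, hva, has⟩ : ∃ a, G.Adj v a ∧ a ∉ s := by
    by_contra! h
    exact Set.not_nontrivial_iff.2 hend (hv.mono fun a ha => ⟨ha, h a ha⟩)
  obtain ⟨w, -, hw⟩ := hleaf a has
  have hvw : v ∈ G.neighborSet a := hva.symm
  rw [hw, Set.mem_singleton_iff] at hvw
  exact ⟨a, has, hvw ▸ hw⟩

theorem subsingleton_neighborSet_inter {W : Type*} {H : SimpleGraph W} (e : G.induce s ≃g H) {i : W}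
    (hi : (H.neighborSet i).Subsingleton) : (G.neighborSet (e.symm i) ∩ s).Subsingleton := by
  have hadj : ∀ z : s, G.Adj (e.symm i) z → e z ∈ H.neighborSet i := fun z h => by
    rw [mem_neighborSet, ← e.symm.map_adj_iff, e.symm_apply_apply]
    exact h
  rintro x ⟨hx, hxs⟩ y ⟨hy, hys⟩
  exact congrArg Subtype.val (e.injective (hi (hadj ⟨x, hxs⟩ hx) (hadj ⟨y, hys⟩ hy)))

theorem exists_comap_eq_pathGraph (e : G.induce s ≃g pathGraph (k + 1))
    (hs : ∀ v ∈ s, (G.neighborSet v).Nontrivial)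
    (hleaf : ∀ v ∉ s, ∃ w ∈ s, G.neighborSet v = {w}) :
    ∃ f : Fin (k + 3) → V, G.comap f = pathGraph (k + 3) := by
  let sp : Fin (k + 1) → V := fun i => e.symm i
  have hsp : G.comap sp = pathGraph (k + 1) := by
    ext i j
    exact e.symm.map_adj_iff
  have hsp_inj : sp.Injective := Subtype.val_injective.comp e.symm.injective
  have hpendant : ∀ i, ((pathGraph (k + 1)).neighborSet i).Subsingleton →
      ∃ a ∉ s, ∀ x, G.Adj a x ↔ x = sp i := by
    intro i hi
    obtain ⟨a, has, ha⟩ := exists_neighborSet_eq_singleton_of_end hleaf (hs _ (e.symm i).2)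
      (subsingleton_neighborSet_inter e hi)
    exact ⟨a, has, fun x => by rw [← mem_neighborSet, ha, Set.mem_singleton_iff]⟩
  obtain ⟨a, -, ha⟩ := hpendant 0 fun i hi j hj => by
    simp only [mem_neighborSet, pathGraph_adj, Fin.val_zero] at hi hj
    omega
  obtain ⟨b, hbs, hb⟩ := hpendant (Fin.last k) fun i hi j hj => by
    simp only [mem_neighborSet, pathGraph_adj, Fin.val_last] at hi hj
    omega
  have hba : ¬ G.Adj b a := fun h => hbs ((ha b).1 h.symm ▸ (e.symm 0).2)
  let f : Fin (k + 2) → V := Fin.cons a sp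
  have hf : G.comap f = pathGraph (k + 2) :=
    comap_cons_eq_pathGraph hsp fun i => (ha _).trans hsp_inj.eq_iff
  have hbf : ∀ i, G.Adj b (f i) ↔ i = Fin.last (k + 1) := by
    refine Fin.cases (iff_of_false hba (Fin.last_pos.ne)) fun i => ?_
    rw [← Fin.succ_last, Fin.succ_inj, ← hsp_inj.eq_iff]
    exact hb (sp i)
  have hrev : G.comap (f ∘ Fin.rev) = pathGraph (k + 2) := by
    rw [← comap_comap, hf, comap_rev_pathGraph]
  exact ⟨_, comap_cons_eq_pathGraph hrev fun i => by
    rw [Function.comp_apply, hbf, Fin.rev_eq_iff, Fin.rev_last]⟩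

end Spine

/-- A caterpillar is a tree whose non-leaf vertices (vertices of degree at least two)
induce a path; if the spine has `k ≥ 1` vertices then the overlap number is `k + 2`. -/
theorem overlapNumber_caterpillar {V : Type*} [Fintype V] [DecidableEq V]
    (G : SimpleGraph V) [DecidableRel G.Adj] (hT : G.IsTree) (k : ℕ) (hk : 1 ≤ k)
    (hspine : Nonempty ((G.induce {v | 2 ≤ G.degree v}) ≃g SimpleGraph.pathGraph k)) :
    overlapNumber G = k + 2 := by
  obtain ⟨e⟩ := hspine
  obtain ⟨k, rfl⟩ := Nat.exists_eq_add_of_le' hk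
  have hspine : ∀ v, v ∈ {v | 2 ≤ G.degree v} ↔ (G.neighborSet v).Nontrivial :=
    fun v => two_le_degree_iff_nontrivial_neighborSet
  have hleaf : ∀ v ∉ {v | 2 ≤ G.degree v}, ∃ w ∈ {v | 2 ≤ G.degree v}, G.neighborSet v = {w} := by
    simp only [hspine]
    exact fun v => exists_neighborSet_eq_singleton hT.connected.preconnected
      ⟨_, (hspine _).1 (e.symm 0).2⟩
  obtain ⟨f, hf⟩ := exists_comap_eq_pathGraph e (fun v => (hspine v).1) hleaf
  obtain ⟨S, hS, hSU⟩ := exists_isOverlapRep_subset_range e.toEmbedding hleaf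
  rw [overlapNumber_eq_card hS hSU, Finset.card_range]
  intro S' U' hS' hU'
  rw [Finset.card_range]
  exact (hf ▸ hS'.comap f).le_card_of_pathGraph_s16 fun i => hU' (f i)
end
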